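/- arXiv:2410.04669 — 3 statements merged into one kernel-verified Lean document; each statement's English description precedes it below -/
import Mathlib

section
/- Let j ≥ 1 and let D_1, …, D_j be digraphs such that |V(D_i)| = i for each i and such that the undirected graph underlying each D_i is connected. Then the ℚ-subalgebra of NSym generated by X_{D_1}, X_{D_2}, …, X_{D_j} equals the ℚ-linear span of {Ψ_α : α a composition all of whose parts are ≤ j} (including Ψ_{()} = 1). In particular, ℚ⟨X_{D_1}, …, X_{D_j}⟩ = ℚ⟨Ψ_1, Ψ_2, …, Ψ_j⟩. -/
/-!
Digraph conventions: a digraph `D` on a finite vertex type `V` is given by an arc set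
`E : Finset (V × V)` all of whose arcs `(u, v)` satisfy `u ≠ v`.  For an arc set `S`,
`arcGraph S` is the simple graph with edge set `S' = {{u,v} : (u,v) ∈ S}`.
-/

open scoped Classical

noncomputable section

/-- The undirected simple graph underlying an arc set `S`: `u` and `v` are adjacent
iff `u ≠ v` and (`(u,v) ∈ S` or `(v,u) ∈ S`). -/
def arcGraph {V : Type} (S : Finset (V × V)) : SimpleGraph V :=
  SimpleGraph.fromRel (fun u v => (u, v) ∈ S)

/-- The set of connected components (as vertex subsets) of the spanning subgraph
`(V, S')`. -/
def comps {V : Type} [Fintype V] [DecidableEq V] (S : Finset (V × V)) : Finset (Finset V) :=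
  Finset.univ.image (fun v => Finset.univ.filter (fun w => (arcGraph S).Reachable v w))

/-- Outdegree of a vertex with respect to an arc set: the number of arcs with first
coordinate `w`. -/
def od {V : Type} [DecidableEq V] (E : Finset (V × V)) (w : V) : ℤ :=
  (E.filter (fun a => a.1 = w)).card

/-- Indegree of a vertex with respect to an arc set: the number of arcs with second
coordinate `w`. -/
def indeg {V : Type} [DecidableEq V] (E : Finset (V × V)) (w : V) : ℤ :=
  (E.filter (fun a => a.2 = w)).card

/-- Total degree of a vertex subset `W`: the sum of the outdegrees of its elements
minus the sum of their indegrees. -/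
def td {V : Type} [DecidableEq V] (E : Finset (V × V)) (W : Finset V) : ℤ :=
  (∑ w ∈ W, od E w) - ∑ w ∈ W, indeg E w

/-- The increasing word of the elements of the finite set `C` with respect to the
linear order `r`. -/
def word {V : Type} (r : LinearOrder V) (C : Finset V) : List V :=
  letI := r
  C.sort (· ≤ ·)

/-- The relation `⊳^r` on vertex subsets: `tri E r C C'` holds iff `td C > td C'`, or
`td C = td C'` and `|C| > |C'|`, or `td C = td C'` and `|C| = |C'|` and the increasing
word of `C` is lexicographically strictly greater than that of `C'` with respect to `r`. -/
def tri {V : Type} [DecidableEq V] (E : Finset (V × V)) (r : LinearOrder V)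
    (C C' : Finset V) : Prop :=
  td E C > td E C' ∨
    (td E C = td E C' ∧ C.card > C'.card) ∨
      (td E C = td E C' ∧ C.card = C'.card ∧ List.Lex r.lt (word r C') (word r C))

/-- The connected components of `(V, S')`, listed in decreasing `⊳^r`-order. -/
def sortedComps {V : Type} [Fintype V] [DecidableEq V]
    (E S : Finset (V × V)) (r : LinearOrder V) : List (Finset V) :=
  (comps S).toList.mergeSort (fun C C' => decide (tri E r C C' ∨ C = C'))

/-- The composition `α^r_D(S)`: the sizes of the connected components of `(V, S')`,
listed in decreasing `⊳^r`-order. -/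
def alphaComp {V : Type} [Fintype V] [DecidableEq V]
    (E S : Finset (V × V)) (r : LinearOrder V) : List ℕ :=
  (sortedComps E S r).map Finset.card

/-- `NSym`, the algebra of noncommutative symmetric functions over `ℚ`, modeled as the
free associative `ℚ`-algebra on countably many noncommuting generators; the generator
indexed by `n : ℕ` is the noncommutative power sum `Ψ_{n+1}`, so that `NSym` is free
on `Ψ_1, Ψ_2, …`, with `Ψ_n` of degree `n`. -/
abbrev NSym : Type := FreeAlgebra ℚ ℕ

/-- The noncommutative power sum generator `Ψ_n` (intended for `n ≥ 1`). -/
def Psi (n : ℕ) : NSym := FreeAlgebra.ι ℚ (n - 1)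

/-- `Ψ_α` for a composition `α = (α_1, …, α_ℓ)`: the product `Ψ_{α_1} Ψ_{α_2} ⋯ Ψ_{α_ℓ}`,
with `Ψ_{()} = 1`. -/
def PsiComp (l : List ℕ) : NSym := (l.map Psi).prod

/-- The chromatic noncommutative symmetric function of the digraph with arc set `E`,
computed using the linear order `r` on the vertices:
`X_D = Σ_{S ⊆ E} (−1)^{|S|} Ψ_{α(S)}`. -/
def XD {V : Type} [Fintype V] [DecidableEq V] (E : Finset (V × V)) (r : LinearOrder V) :
    NSym :=
  ∑ S ∈ E.powerset, ((-1 : ℚ) ^ S.card) • PsiComp (alphaComp E S r)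

/-!
Grouping the terms of `X_D` by whether `(V, S')` is connected gives
`X_D = c_D Ψ_n + (a polynomial in Ψ_1, …, Ψ_{n-1})` with `n = |V|`, where `c_D` is the sum of
`(-1)^|S|` over the arc sets `S` for which `(V, S')` is connected. Up to the sign `(-1)^(n-1)`,
`c_D` is the value `T(1, 0)` of the Tutte polynomial of the underlying multigraph.
Deletion–contraction shows that this value is positive when the multigraph is connected and has no
loops. Hence `X_{D_1}, …, X_{D_j}` is obtained from `Ψ_1, …, Ψ_j` by a triangular change of
generators with invertible diagonal.
-/

section Reachability

open SimpleGraph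

variable {V : Type*} {G H : SimpleGraph V} {u v x y : V}

theorem reachable_of_forall_adj_reachable (h : ∀ a b, G.Adj a b → H.Reachable a b)
    (hxy : G.Reachable x y) : H.Reachable x y := by
  obtain ⟨p⟩ := hxy
  induction p with
  | nil => rfl
  | cons hadj _ ih => exact (h _ _ hadj).trans ih

theorem connected_sup_edge_iff (huv : G.Reachable u v) :
    (G ⊔ edge u v).Connected ↔ G.Connected := by
  refine ⟨fun h => ?_, fun h => h.mono le_sup_left⟩
  have := h.nonempty
  refine ⟨fun a b => reachable_of_forall_adj_reachable (fun c d hcd => ?_) (h.preconnected a b)⟩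
  rw [sup_adj, edge_adj] at hcd
  rcases hcd with hcd | ⟨⟨rfl, rfl⟩ | ⟨rfl, rfl⟩, -⟩
  exacts [hcd.reachable, huv, huv.symm]

/-- The exchange property of the graphic matroid. -/
theorem reachable_sup_edge_exchange (hxy : ¬ G.Reachable x y)
    (h : (G ⊔ edge u v).Reachable x y) : (G ⊔ edge x y).Reachable u v := by
  by_contra huv
  have hne : x ≠ y := fun hxy' => hxy (hxy' ▸ .rfl)
  have hbridge : (G ⊔ edge x y).IsBridge s(x, y) := isBridge_sup_edge.2 (.of_not_reachable hxy)
  have hbridge' : (G ⊔ edge u v).IsBridge s(x, y) :=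
    (hbridge.sup_edge_of_not_reachable_of_isBridge huv (by simp [hne])).anti
      (sup_le_sup_right le_sup_left _)
  have hadj : (G ⊔ edge u v).Adj x y := hbridge'.reachable_iff_adj.1 h
  rw [sup_adj, edge_adj] at hadj
  have hreach : (G ⊔ edge x y).Reachable x y :=
    Adj.reachable (sup_adj _ _ _ _ |>.2 <| .inr <| (edge_adj ..).2 ⟨by simp, hne⟩)
  rcases hadj with hadj | ⟨⟨rfl, rfl⟩ | ⟨rfl, rfl⟩, -⟩
  exacts [hxy hadj.reachable, huv hreach, huv hreach.symm]

end Reachability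

section TutteOneZero

open SimpleGraph

variable {V : Type}

theorem arcGraph_empty : arcGraph (∅ : Finset (V × V)) = ⊥ := by
  ext
  simp [arcGraph]

theorem sup_arcGraph_insert [DecidableEq V] (H : SimpleGraph V) (e : V × V) (S : Finset (V × V)) :
    H ⊔ arcGraph (insert e S) = H ⊔ edge e.1 e.2 ⊔ arcGraph S := by
  ext
  simp only [arcGraph, fromRel_adj, sup_adj, edge_adj, Finset.mem_insert, Prod.ext_iff]
  grind

theorem edge_le_arcGraph {S : Finset (V × V)} {e : V × V} (he : e ∈ S) :
    edge e.1 e.2 ≤ arcGraph S := by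
  rw [edge_le_iff, or_iff_not_imp_left]
  exact fun hne => (fromRel_adj ..).2 ⟨hne, .inl he⟩

variable [Fintype V] {H : SimpleGraph V} {E : Finset (V × V)} {e : V × V}

/-- For a forest `H`, the value `T(1, 0)` of the Tutte polynomial of the multigraph `M` obtained
from the arcs of `E` by contracting the edges of `H`, if `M` is connected, and `0` otherwise.
A connected `M` has rank `|V| - 1 - |E(H)|`, so that `(-1)^(|S| + |V| + 1 + |E(H)|)` is the usual
sign `(-1)^(|S| - rank)` written without subtraction. -/
def tutteOneZero (H : SimpleGraph V) (E : Finset (V × V)) : ℚ :=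
  ∑ S ∈ E.powerset with (H ⊔ arcGraph S).Connected,
    (-1) ^ (S.card + (Fintype.card V + 1 + H.edgeSet.ncard))

theorem tutteOneZero_insert_of_reachable (he : e ∉ E) (hr : H.Reachable e.1 e.2) :
    tutteOneZero H (insert e E) = 0 := by
  simp only [tutteOneZero, Finset.sum_filter]
  rw [Finset.sum_powerset_insert he, ← Finset.sum_add_distrib]
  refine Finset.sum_eq_zero fun S hS => ?_
  have heS : e ∉ S := fun h => he (Finset.mem_powerset.1 hS h)
  have hconn : (H ⊔ arcGraph (insert e S)).Connected ↔ (H ⊔ arcGraph S).Connected := by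
    rw [sup_arcGraph_insert, sup_right_comm, connected_sup_edge_iff (hr.mono le_sup_left)]
  simp only [hconn, Finset.card_insert_of_notMem heS]
  split_ifs <;> ring

theorem tutteOneZero_insert_of_not_reachable (he : e ∉ E) (hr : ¬ H.Reachable e.1 e.2) :
    tutteOneZero H (insert e E) = tutteOneZero H E + tutteOneZero (H ⊔ edge e.1 e.2) E := by
  have hcard : (H ⊔ edge e.1 e.2).edgeSet.ncard = H.edgeSet.ncard + 1 := by
    simp only [← coe_edgeFinset, Set.ncard_coe_finset]
    convert! H.card_edgeFinset_sup_edge (fun h => hr h.reachable) (fun h => hr (h ▸ .rfl))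
  simp only [tutteOneZero, Finset.sum_filter, hcard]
  rw [Finset.sum_powerset_insert he]
  congr 1
  refine Finset.sum_congr rfl fun S hS => ?_
  have heS : e ∉ S := fun h => he (Finset.mem_powerset.1 hS h)
  simp only [sup_arcGraph_insert, Finset.card_insert_of_notMem heS]
  congr 2
  ring

theorem tutteOneZero_empty_of_isTree (hH : H.IsTree) : tutteOneZero H ∅ = 1 := by
  have hcard : H.edgeSet.ncard + 1 = Fintype.card V := by
    rw [← hH.card_edgeFinset, ← coe_edgeFinset, Set.ncard_coe_finset]
  have heven : Even (Fintype.card V + 1 + H.edgeSet.ncard) := by grind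
  simp [tutteOneZero, Finset.sum_filter, arcGraph_empty, hH.connected, heven.neg_one_pow]

theorem tutteOneZero_empty_of_not_connected (hH : ¬ H.Connected) : tutteOneZero H ∅ = 0 := by
  simp [tutteOneZero, Finset.sum_filter, arcGraph_empty, hH]

theorem tutteOneZero_nonneg (hH : H.IsAcyclic) : 0 ≤ tutteOneZero H E := by
  induction E using Finset.induction_on generalizing H with
  | empty =>
    by_cases hc : H.Connected
    · simp [tutteOneZero_empty_of_isTree ⟨hc, hH⟩]
    · simp [tutteOneZero_empty_of_not_connected hc]
  | insert e E he ih =>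
    by_cases hr : H.Reachable e.1 e.2
    · rw [tutteOneZero_insert_of_reachable he hr]
    · rw [tutteOneZero_insert_of_not_reachable he hr]
      exact add_nonneg (ih hH) (ih (hH.sup_edge_of_not_reachable hr))

theorem tutteOneZero_pos (hH : H.IsAcyclic) (hloop : ∀ e ∈ E, ¬ H.Reachable e.1 e.2)
    (hconn : (H ⊔ arcGraph E).Connected) : 0 < tutteOneZero H E := by
  induction E using Finset.induction_on generalizing H with
  | empty =>
    rw [tutteOneZero_empty_of_isTree ⟨by simpa [arcGraph_empty] using hconn, hH⟩]
    exact one_pos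
  | insert e E he ih =>
    have hr := hloop e (Finset.mem_insert_self e E)
    have hloopE : ∀ f ∈ E, ¬ H.Reachable f.1 f.2 := fun f hf =>
      hloop f (Finset.mem_insert_of_mem hf)
    have hH' := hH.sup_edge_of_not_reachable hr
    rw [sup_arcGraph_insert] at hconn
    rw [tutteOneZero_insert_of_not_reachable he hr]
    by_cases hE : (H ⊔ arcGraph E).Connected
    · exact add_pos_of_pos_of_nonneg (ih hH hloopE hE) (tutteOneZero_nonneg hH')
    · refine add_pos_of_nonneg_of_pos (tutteOneZero_nonneg hH)
        (ih hH' (fun f hf hrf => hE ?_) hconn)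
      -- An arc `f` that becomes a loop on contracting `e` is parallel to `e`, so `e` is no bridge.
      have he' : (H ⊔ arcGraph E).Reachable e.1 e.2 :=
        (reachable_sup_edge_exchange (hloopE f hf) hrf).mono
          (sup_le_sup_left (edge_le_arcGraph hf) H)
      rwa [sup_right_comm, connected_sup_edge_iff he'] at hconn

end TutteOneZero

section Generators

theorem adjoin_range_eq_of_triangular {ι R A : Type*} [Preorder ι] [WellFoundedLT ι] [CommRing R]
    [Ring A] [Algebra R A] {x y : ι → A} {c : ι → R} (hc : ∀ i, IsUnit (c i))
    (hxy : ∀ i, x i - c i • y i ∈ Algebra.adjoin R (y '' Set.Iio i)) :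
    Algebra.adjoin R (Set.range x) = Algebra.adjoin R (Set.range y) := by
  apply le_antisymm <;> apply Algebra.adjoin_le <;> rintro - ⟨i, rfl⟩
  · have hlower : x i - c i • y i ∈ Algebra.adjoin R (Set.range y) :=
      Algebra.adjoin_mono (Set.image_subset_range y _) (hxy i)
    have hy : y i ∈ Algebra.adjoin R (Set.range y) := Algebra.subset_adjoin (Set.mem_range_self i)
    simpa using add_mem hlower (Subalgebra.smul_mem _ hy (c i))
  · induction i using WellFoundedLT.induction with
    | ind i ih =>
      have hle : Algebra.adjoin R (y '' Set.Iio i) ≤ Algebra.adjoin R (Set.range x) :=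
        Algebra.adjoin_le (by rintro - ⟨k, hk, rfl⟩; exact ih k hk)
      have hx : x i ∈ Algebra.adjoin R (Set.range x) :=
        Algebra.subset_adjoin (Set.mem_range_self i)
      have hdiag : c i • y i ∈ Algebra.adjoin R (Set.range x) := by
        simpa using sub_mem hx (hle (hxy i))
      obtain ⟨u, hu⟩ := hc i
      simpa [← hu, Units.smul_def, smul_smul] using Subalgebra.smul_mem _ hdiag (↑u⁻¹ : R)

theorem coe_closure_image_eq_image_prod {α M : Type*} [Monoid M] (f : α → M) (s : Set α) :
    (Submonoid.closure (f '' s) : Set M) =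
      (fun l : List α => (l.map f).prod) '' {l | ∀ a ∈ l, a ∈ s} := by
  have hmap : {l : List M | ∀ x ∈ l, x ∈ f '' s} = List.map f '' {l | ∀ a ∈ l, a ∈ s} := by
    rw [Set.image_eq_range f, ← Set.range_list_map, ← Set.range_list_map_coe, ← Set.range_comp]
    exact congrArg Set.range (funext fun _ => List.map_map.symm)
  rw [Submonoid.closure_eq_image_prod, hmap, Set.image_image]

theorem toSubmodule_adjoin_image_Psi (s : Set ℕ) :
    Subalgebra.toSubmodule (Algebra.adjoin ℚ (Psi '' s)) =
      Submodule.span ℚ (PsiComp '' {l | ∀ a ∈ l, a ∈ s}) := by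
  rw [Algebra.adjoin_eq_span, coe_closure_image_eq_image_prod]
  rfl

theorem PsiComp_mem_adjoin {s : Set ℕ} {l : List ℕ} (hl : ∀ a ∈ l, a ∈ s) :
    PsiComp l ∈ Algebra.adjoin ℚ (Psi '' s) :=
  (toSubmodule_adjoin_image_Psi s).ge (Submodule.subset_span ⟨l, hl, rfl⟩)

end Generators

section Chromatic

variable {V : Type} [Fintype V] [DecidableEq V] {S : Finset (V × V)}

theorem alphaComp_of_connected (E : Finset (V × V)) (r : LinearOrder V)
    (hS : (arcGraph S).Connected) : alphaComp E S r = [Fintype.card V] := by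
  have := hS.nonempty
  have hcomps : comps S = {Finset.univ} := by
    ext C
    simp [comps, hS.preconnected _ _, eq_comm]
  simp [alphaComp, sortedComps, hcomps]

theorem mem_Ico_of_mem_alphaComp {E : Finset (V × V)} {r : LinearOrder V} {a : ℕ}
    (hS : ¬ (arcGraph S).Connected) (ha : a ∈ alphaComp E S r) :
    a ∈ Set.Ico 1 (Fintype.card V) := by
  simp only [alphaComp, sortedComps, List.mem_map, List.mem_mergeSort, Finset.mem_toList, comps,
    Finset.mem_image, Finset.mem_univ, true_and] at ha
  obtain ⟨-, ⟨v, rfl⟩, rfl⟩ := ha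
  refine ⟨Finset.card_pos.2 ⟨v, by simp⟩, ?_⟩
  rw [Finset.card_lt_iff_ne_univ]
  intro huniv
  have hv : ∀ w, (arcGraph S).Reachable v w := by simpa [Finset.filter_eq_self] using huniv
  have : Nonempty V := ⟨v⟩
  exact hS ⟨fun a b => (hv a).symm.trans (hv b)⟩

theorem XD_sub_smul_Psi_mem_adjoin (E : Finset (V × V)) (r : LinearOrder V) :
    XD E r - ((-1) ^ (Fintype.card V + 1) * tutteOneZero ⊥ E) • Psi (Fintype.card V) ∈
      Algebra.adjoin ℚ (Psi '' Set.Ico 1 (Fintype.card V)) := by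
  have hcoeff : (-1) ^ (Fintype.card V + 1) * tutteOneZero ⊥ E =
      ∑ S ∈ E.powerset with (arcGraph S).Connected, (-1 : ℚ) ^ S.card := by
    rw [tutteOneZero, Finset.mul_sum]
    simp only [bot_sup_eq]
    refine Finset.sum_congr rfl fun S _ => ?_
    rw [SimpleGraph.edgeSet_bot, Set.ncard_empty, add_zero, pow_add _ S.card,
      mul_left_comm, ← mul_pow]
    simp
  have hconn : ∑ S ∈ E.powerset with (arcGraph S).Connected,
      (-1 : ℚ) ^ S.card • PsiComp (alphaComp E S r) =
        ((-1) ^ (Fintype.card V + 1) * tutteOneZero ⊥ E) • Psi (Fintype.card V) := by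
    rw [hcoeff, Finset.sum_smul]
    refine Finset.sum_congr rfl fun S hS => ?_
    rw [alphaComp_of_connected E r (Finset.mem_filter.1 hS).2]
    simp [PsiComp]
  rw [XD, ← Finset.sum_filter_add_sum_filter_not _ fun S => (arcGraph S).Connected, hconn,
    add_sub_cancel_left]
  exact sum_mem fun S hS => Subalgebra.smul_mem _ (PsiComp_mem_adjoin fun _ =>
    mem_Ico_of_mem_alphaComp (Finset.mem_filter.1 hS).2) _

end Chromatic

theorem adjoin_range_XD_eq_adjoin_Psi {j : ℕ} {V : Fin j → Type} [∀ i, Fintype (V i)]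
    [∀ i, DecidableEq (V i)] (hcard : ∀ i, Fintype.card (V i) = i + 1)
    (E : ∀ i, Finset (V i × V i)) (r : ∀ i, LinearOrder (V i))
    (hE : ∀ i, ∀ e ∈ E i, e.1 ≠ e.2) (hconn : ∀ i, (arcGraph (E i)).Connected) :
    Algebra.adjoin ℚ (Set.range fun i => XD (E i) (r i)) =
      Algebra.adjoin ℚ (Psi '' Set.Icc 1 j) := by
  have hrange : Psi '' Set.Icc 1 j = Set.range fun i : Fin j => Psi (i + 1) := by
    refine Set.Subset.antisymm ?_ (Set.range_subset_iff.2 fun i => ⟨i + 1, by grind, rfl⟩)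
    rintro - ⟨m, ⟨hm, hmj⟩, rfl⟩
    exact ⟨⟨m - 1, by lia⟩, by simp [Nat.sub_add_cancel hm]⟩
  rw [hrange]
  refine adjoin_range_eq_of_triangular
    (c := fun i => (-1) ^ (i + 1 + 1 : ℕ) * tutteOneZero ⊥ (E i)) (fun i => ?_) (fun i => ?_)
  · have hpos : 0 < tutteOneZero ⊥ (E i) := tutteOneZero_pos SimpleGraph.isAcyclic_bot
      (by simpa using hE i) (by simpa using hconn i)
    exact IsUnit.mk0 _ (mul_ne_zero (by simp) hpos.ne')
  · have hmem := XD_sub_smul_Psi_mem_adjoin (E i) (r i)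
    rw [hcard] at hmem
    refine Algebra.adjoin_mono ?_ hmem
    rintro - ⟨m, ⟨hm, hmi⟩, rfl⟩
    exact ⟨⟨m - 1, by lia⟩, Fin.lt_def.2 (by grind), by simp [Nat.sub_add_cancel hm]⟩

theorem adjoin_chromatic_eq_span_Psi_general {j : ℕ} {V : Fin j → Type} [∀ i, Fintype (V i)]
    [∀ i, DecidableEq (V i)] (hcard : ∀ i, Fintype.card (V i) = i + 1)
    (E : ∀ i, Finset (V i × V i)) (r : ∀ i, LinearOrder (V i))
    (hE : ∀ i, ∀ e ∈ E i, e.1 ≠ e.2) (hconn : ∀ i, (arcGraph (E i)).Connected) :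
    ((Algebra.adjoin ℚ (Set.range fun i => XD (E i) (r i)) : Subalgebra ℚ NSym) : Set NSym) =
      ((Submodule.span ℚ
          {x : NSym | ∃ l : List ℕ, (∀ a ∈ l, 1 ≤ a ∧ a ≤ j) ∧ x = PsiComp l} :
        Submodule ℚ NSym) : Set NSym) ∧
    Algebra.adjoin ℚ (Set.range fun i => XD (E i) (r i)) =
      Algebra.adjoin ℚ {x : NSym | ∃ m : ℕ, 1 ≤ m ∧ m ≤ j ∧ x = Psi m} := by
  have hPsi : {x | ∃ m : ℕ, 1 ≤ m ∧ m ≤ j ∧ x = Psi m} = Psi '' Set.Icc 1 j := by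
    ext; simp [and_assoc, eq_comm]
  have hPsiComp : {x | ∃ l : List ℕ, (∀ a ∈ l, 1 ≤ a ∧ a ≤ j) ∧ x = PsiComp l} =
      PsiComp '' {l | ∀ a ∈ l, a ∈ Set.Icc 1 j} := by
    ext; simp [eq_comm]
  have hadjoin := adjoin_range_XD_eq_adjoin_Psi hcard E r hE hconn
  rw [hPsi, hPsiComp, hadjoin, ← toSubmodule_adjoin_image_Psi, Subalgebra.coe_toSubmodule]
  exact ⟨rfl, rfl⟩

/-- Let `j ≥ 1` and let `D_1, …, D_j` be digraphs such that `D_i` has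
exactly `i` vertices and the undirected graph underlying each `D_i` is connected (here,
for `i : Fin j`, the digraph `D_{i+1}` has vertex set `Fin (i+1)` and arc set `E i`).
Then the `ℚ`-subalgebra of `NSym` generated by `X_{D_1}, …, X_{D_j}` equals the
`ℚ`-linear span of `{Ψ_α : α a composition all of whose parts are ≤ j}` (including
`Ψ_{()} = 1`); in particular it equals the `ℚ`-subalgebra generated by
`Ψ_1, Ψ_2, …, Ψ_j`. -/
theorem adjoin_chromatic_eq_span_Psi
    (j : ℕ) (hj : 1 ≤ j)
    (E : ∀ i : Fin j, Finset (Fin (i.val + 1) × Fin (i.val + 1)))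
    (hE : ∀ i, ∀ e ∈ E i, e.1 ≠ e.2)
    (hconn : ∀ i, (arcGraph (E i)).Connected) :
    ((Algebra.adjoin ℚ (Set.range fun i : Fin j => XD (E i) inferInstance) :
        Subalgebra ℚ NSym) : Set NSym) =
      ((Submodule.span ℚ
          {x : NSym | ∃ l : List ℕ, (∀ a ∈ l, 1 ≤ a ∧ a ≤ j) ∧ x = PsiComp l} :
        Submodule ℚ NSym) : Set NSym) ∧
    Algebra.adjoin ℚ (Set.range fun i : Fin j => XD (E i) inferInstance) =
      Algebra.adjoin ℚ {x : NSym | ∃ m : ℕ, 1 ≤ m ∧ m ≤ j ∧ x = Psi m} := by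
  exact adjoin_chromatic_eq_span_Psi_general (fun i => Fintype.card_fin _) E _ hE hconn

end
end

section
/- For every n ≥ 0, the chromatic noncommutative symmetric function of the inwardly directed star graph on n + 1 vertices satisfies X_{S_{n+1}} = Σ_{i=0}^{n} (−1)^i · binom(n, i) · Ψ_{(1^{n−i}, i+1)}, where (1^{n−i}, i+1) denotes the composition consisting of n − i parts equal to 1 followed by a final part equal to i + 1. -/
/-!
Digraph conventions: a digraph `D` on a finite vertex type `V` is given by an arc set
`E : Finset (V × V)` all of whose arcs `(u, v)` satisfy `u ≠ v`.  For an arc set `S`,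
`arcGraph S` is the simple graph with edge set `S' = {{u,v} : (u,v) ∈ S}`.
-/

open scoped Classical

noncomputable section

/-- The inwardly directed star graph `S_{n+1}`: the digraph on the `n + 1` vertices
`Fin (n+1)` whose arcs are `(v, 0)` for each vertex `v ≠ 0`. -/
def inStarArcs (n : ℕ) : Finset (Fin (n + 1) × Fin (n + 1)) :=
  Finset.univ.filter (fun a => a.1 ≠ 0 ∧ a.2 = 0)

/-! For an arc set `S` of the inward star, the component of the center is the only one that is not
a single leaf. It contains the head of every arc of the star, so its total degree is at most `0`,
while a leaf has positive total degree. Hence the central component, of size `|S| + 1`, comes last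
in `⊳`-order, and `α(S) = (1^{n-|S|}, |S|+1)` depends on `|S|` alone. -/

section TriangleOrder

variable {V : Type} [r : LinearOrder V]

theorem word_injective : Function.Injective (word r) := fun C C' h => by
  rw [← C.sort_toFinset (· ≤ ·), ← C'.sort_toFinset (· ≤ ·)]
  exact congrArg List.toFinset h

variable [DecidableEq V]

/-- The lexicographic key by which `⊳` compares vertex sets: `C ⊳ C'` iff the key of `C` is the
larger one. -/
def triKey (E : Finset (V × V)) (C : Finset V) : ℤ ×ₗ (ℕ ×ₗ List V) :=
  toLex (td E C, toLex (C.card, word r C))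

theorem triKey_injective (E : Finset (V × V)) : Function.Injective (triKey E) := fun C C' h => by
  simp only [triKey, toLex_inj, Prod.mk.injEq] at h
  exact word_injective h.2.2

theorem tri_iff_triKey_lt (E : Finset (V × V)) (C C' : Finset V) :
    tri E r C C' ↔ triKey E C' < triKey E C := by
  simp only [tri, triKey, Prod.Lex.toLex_lt_toLex, gt_iff_lt, ← and_or_left, eq_comm (a := td E C),
    eq_comm (a := C.card)]
  rfl

theorem tri_or_eq_iff_triKey_le (E : Finset (V × V)) (C C' : Finset V) :
    tri E r C C' ∨ C = C' ↔ triKey E C' ≤ triKey E C := by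
  rw [tri_iff_triKey_lt, le_iff_lt_or_eq, (triKey_injective E).eq_iff, eq_comm (a := C)]

theorem td_le_td_of_triKey_le {E : Finset (V × V)} {C C' : Finset V}
    (h : triKey E C ≤ triKey E C') : td E C ≤ td E C' := by
  rw [triKey, triKey, Prod.Lex.toLex_le_toLex] at h
  exact h.elim le_of_lt fun h => h.1.le

end TriangleOrder

section SortedComps

theorem exists_eq_append_singleton_of_pairwise {α β : Type*} [Preorder β] {f : α → β} {l : List α}
    {b : α} (hl : l.Pairwise fun x y => f y ≤ f x) (hb : b ∈ l)
    (hlt : ∀ x ∈ l, x ≠ b → f b < f x) : ∃ s, l = s ++ [b] := by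
  obtain ⟨s, x, rfl⟩ := List.eq_nil_or_concat' l |>.resolve_left (List.ne_nil_of_mem hb)
  obtain rfl : x = b := by
    by_contra hne
    have hbs : b ∈ s := by simpa [Ne.symm hne] using hb
    have hle : f x ≤ f b := (List.pairwise_append.1 hl).2.2 b hbs x (List.mem_singleton_self x)
    exact (hlt x (by simp) hne).not_ge hle
  exact ⟨s, rfl⟩

variable {V : Type} [Fintype V] [DecidableEq V]

theorem sortedComps_perm (E S : Finset (V × V)) (r : LinearOrder V) :
    (sortedComps E S r).Perm (comps S).toList :=
  List.mergeSort_perm _ _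

theorem pairwise_td_sortedComps (E S : Finset (V × V)) (r : LinearOrder V) :
    (sortedComps E S r).Pairwise fun C C' => td E C' ≤ td E C := by
  have hsorted := List.pairwise_mergeSort (le := fun C C' => decide (tri E r C C' ∨ C = C'))
    (by simpa only [decide_eq_true_eq, tri_or_eq_iff_triKey_le] using
      fun _ _ _ hab hbc => hbc.trans hab)
    (by simpa only [Bool.or_eq_true, decide_eq_true_eq, tri_or_eq_iff_triKey_le] using
      fun _ _ => le_total _ _)
    (comps S).toList
  refine hsorted.imp fun h => td_le_td_of_triKey_le ?_
  simpa only [decide_eq_true_eq, tri_or_eq_iff_triKey_le] using h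

open scoped List in
theorem exists_perm_sortedComps_eq_append_singleton {E S : Finset (V × V)} (r : LinearOrder V)
    {B : Finset V} {T : Finset (Finset V)} (hcomps : comps S = insert B T)
    (hlt : ∀ C ∈ T, td E B < td E C) :
    ∃ l : List (Finset V), l ~ T.toList ∧ sortedComps E S r = l ++ [B] := by
  have hB : B ∉ T := fun h => (hlt B h).false
  have hmem : ∀ C, C ∈ sortedComps E S r ↔ C = B ∨ C ∈ T := fun C => by
    rw [(sortedComps_perm E S r).mem_iff, Finset.mem_toList, hcomps, Finset.mem_insert]
  obtain ⟨l, hl⟩ := exists_eq_append_singleton_of_pairwise (pairwise_td_sortedComps E S r)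
    ((hmem B).2 (.inl rfl)) fun C hC hne => hlt C (((hmem C).1 hC).resolve_left hne)
  have hperm : B :: l ~ B :: T.toList := calc
    B :: l ~ l ++ [B] := (List.perm_append_singleton B l).symm
    _ ~ (comps S).toList := hl ▸ sortedComps_perm E S r
    _ ~ B :: T.toList := hcomps ▸ Finset.toList_insert hB
  exact ⟨l, hperm.cons_inv, hl⟩

end SortedComps

section TotalDegree

variable {V : Type} [DecidableEq V] {E : Finset (V × V)} {W : Finset V}

theorem td_eq_card_sub_card (E : Finset (V × V)) (W : Finset V) :
    td E W = ({a ∈ E | a.1 ∈ W}.card : ℤ) - {a ∈ E | a.2 ∈ W}.card := by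
  simp only [td, od, indeg, ← Nat.cast_sum, Finset.sum_card_fiberwise_eq_card_filter]

theorem td_nonpos (hheads : ∀ a ∈ E, a.2 ∈ W) : td E W ≤ 0 := by
  rw [td_eq_card_sub_card, Finset.filter_true_of_mem hheads, sub_nonpos, Nat.cast_le]
  exact Finset.card_filter_le E _

theorem td_pos {a : V × V} (haE : a ∈ E) (haW : a.1 ∈ W) (hheads : ∀ b ∈ E, b.2 ∉ W) :
    0 < td E W := by
  rw [td_eq_card_sub_card, Finset.filter_false_of_mem hheads, Finset.card_empty, Nat.cast_zero,
    sub_zero, Nat.cast_pos, Finset.card_pos]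
  exact ⟨a, Finset.mem_filter.2 ⟨haE, haW⟩⟩

end TotalDegree

section Components

variable {V : Type} [DecidableEq V] {S : Finset (V × V)} {c : V}

/-- The component of the center `c` when all arcs of `S` point to `c`: the center and the tails of
the arcs. -/
def starComp (c : V) (S : Finset (V × V)) : Finset V :=
  insert c (S.image Prod.fst)

theorem center_mem_starComp (c : V) (S : Finset (V × V)) : c ∈ starComp c S :=
  Finset.mem_insert_self _ _

theorem fst_mem_starComp (c : V) {a : V × V} (ha : a ∈ S) : a.1 ∈ starComp c S :=
  Finset.mem_insert_of_mem (Finset.mem_image_of_mem _ ha)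

theorem mem_starComp_of_arcGraph_adj (hS : ∀ a ∈ S, a.2 = c) {v w : V}
    (h : (arcGraph S).Adj v w) : v ∈ starComp c S ∧ w ∈ starComp c S := by
  have harc : ∀ a ∈ S, a.1 ∈ starComp c S ∧ a.2 ∈ starComp c S := fun a ha =>
    ⟨fst_mem_starComp c ha, hS a ha ▸ center_mem_starComp c S⟩
  obtain ⟨-, hvw | hwv⟩ := (SimpleGraph.fromRel_adj _ _ _).1 h
  · exact harc _ hvw
  · exact (harc _ hwv).symm

theorem arcGraph_reachable_center (hS : ∀ a ∈ S, a.2 = c) {v : V} (hv : v ∈ starComp c S) :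
    (arcGraph S).Reachable v c := by
  by_cases hvc : v = c
  · rw [hvc]
  · obtain ⟨a, ha, rfl⟩ := Finset.mem_image.1 (Finset.mem_of_mem_insert_of_ne hv hvc)
    refine SimpleGraph.Adj.reachable ((SimpleGraph.fromRel_adj _ _ _).2 ⟨hvc, .inl ?_⟩)
    rwa [← hS a ha]

theorem arcGraph_reachable_iff (hS : ∀ a ∈ S, a.2 = c) (v w : V) :
    (arcGraph S).Reachable v w ↔ v = w ∨ v ∈ starComp c S ∧ w ∈ starComp c S := by
  constructor
  · rintro ⟨p⟩
    induction p with
    | nil => exact .inl rfl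
    | cons hadj _ ih =>
      obtain ⟨hu, hv⟩ := mem_starComp_of_arcGraph_adj hS hadj
      rcases ih with rfl | ⟨-, hw⟩
      · exact .inr ⟨hu, hv⟩
      · exact .inr ⟨hu, hw⟩
  · rintro (rfl | ⟨hv, hw⟩)
    · rfl
    · exact (arcGraph_reachable_center hS hv).trans (arcGraph_reachable_center hS hw).symm

theorem comps_eq_insert_image_singleton [Fintype V] {B : Finset V} (hB : B.Nonempty)
    (hreach : ∀ v w, (arcGraph S).Reachable v w ↔ v = w ∨ v ∈ B ∧ w ∈ B) :
    comps S = insert B (Bᶜ.image singleton) := by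
  have hcomp : ∀ v, ({w | (arcGraph S).Reachable v w} : Finset V) = if v ∈ B then B else {v} := by
    intro v
    ext w
    split_ifs with hv <;> grind
  ext C
  simp only [comps, hcomp, Finset.mem_image, Finset.mem_insert, Finset.mem_univ, true_and,
    Finset.mem_compl]
  obtain ⟨b, hb⟩ := hB
  grind

end Components

section InwardStar

variable {V : Type} [Fintype V] [DecidableEq V] {c : V} {S : Finset (V × V)}

/-- The arc set of the inward star with center `c` on an arbitrary vertex type. -/
def inwardStar (c : V) : Finset (V × V) :=
  {c}ᶜ ×ˢ {c}

theorem mem_inwardStar {a : V × V} : a ∈ inwardStar c ↔ a.1 ≠ c ∧ a.2 = c := by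
  simp only [inwardStar, Finset.mem_product, Finset.mem_compl, Finset.mem_singleton, ne_eq]

theorem card_inwardStar (c : V) : (inwardStar c).card = Fintype.card V - 1 := by
  simp [inwardStar, Finset.card_compl]

theorem inStarArcs_eq_inwardStar (n : ℕ) : inStarArcs n = inwardStar 0 := by
  ext a
  simp [inStarArcs, mem_inwardStar]

theorem card_starComp (hS : S ⊆ inwardStar c) : (starComp c S).card = S.card + 1 := by
  have hinj : Set.InjOn Prod.fst (S : Set (V × V)) := fun a ha b hb hab =>
    Prod.ext hab ((mem_inwardStar.1 (hS ha)).2.trans (mem_inwardStar.1 (hS hb)).2.symm)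
  have hc : c ∉ S.image Prod.fst := fun h => by
    obtain ⟨a, ha, hac⟩ := Finset.mem_image.1 h
    exact (mem_inwardStar.1 (hS ha)).1 hac
  rw [starComp, Finset.card_insert_of_notMem hc, Finset.card_image_of_injOn hinj]

theorem td_inwardStar_nonpos {W : Finset V} (hc : c ∈ W) : td (inwardStar c) W ≤ 0 :=
  td_nonpos fun _ ha => (mem_inwardStar.1 ha).2 ▸ hc

theorem td_inwardStar_singleton_pos {v : V} (hv : v ≠ c) : 0 < td (inwardStar c) {v} := by
  refine td_pos (a := (v, c)) (mem_inwardStar.2 ⟨hv, rfl⟩) (Finset.mem_singleton_self v) ?_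
  intro b hb hbv
  exact hv ((Finset.mem_singleton.1 hbv).symm.trans (mem_inwardStar.1 hb).2)

theorem alphaComp_inwardStar (hS : S ⊆ inwardStar c) (r : LinearOrder V) :
    alphaComp (inwardStar c) S r =
      List.replicate (Fintype.card V - (S.card + 1)) 1 ++ [S.card + 1] := by
  have hcomps : comps S = insert (starComp c S) ((starComp c S)ᶜ.image singleton) :=
    comps_eq_insert_image_singleton ⟨c, center_mem_starComp c S⟩
      (arcGraph_reachable_iff fun a ha => (mem_inwardStar.1 (hS ha)).2)
  have hlt : ∀ C ∈ (starComp c S)ᶜ.image singleton,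
      td (inwardStar c) (starComp c S) < td (inwardStar c) C := by
    refine Finset.forall_mem_image.2 fun v hv => ?_
    have hvc : v ≠ c := fun h => Finset.mem_compl.1 hv (h ▸ center_mem_starComp c S)
    exact (td_inwardStar_nonpos (center_mem_starComp c S)).trans_lt
      (td_inwardStar_singleton_pos hvc)
  obtain ⟨l, hperm, hl⟩ := exists_perm_sortedComps_eq_append_singleton r hcomps hlt
  have hones : l.map Finset.card = List.replicate (Fintype.card V - (S.card + 1)) 1 := by
    refine List.eq_replicate_iff.2 ⟨?_, ?_⟩
    · rw [List.length_map, hperm.length_eq, Finset.length_toList,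
        Finset.card_image_of_injective _ Finset.singleton_injective, Finset.card_compl,
        card_starComp hS]
    · refine List.forall_mem_map.2 fun C hC => ?_
      obtain ⟨v, -, rfl⟩ := Finset.mem_image.1 (Finset.mem_toList.1 (hperm.mem_iff.1 hC))
      exact Finset.card_singleton v
  rw [alphaComp, hl, List.map_append, hones, List.map_singleton, card_starComp hS]

theorem XD_inward_star_general (c : V) (r : LinearOrder V) {n : ℕ}
    (hV : Fintype.card V = n + 1) :
    XD (inwardStar c) r =
      ∑ i ∈ Finset.range (n + 1),
        ((-1 : ℚ) ^ i * (n.choose i : ℚ)) •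
          PsiComp (List.replicate (n - i) 1 ++ [i + 1]) := by
  let f (i : ℕ) : NSym := (-1 : ℚ) ^ i • PsiComp (List.replicate (n - i) 1 ++ [i + 1])
  calc XD (inwardStar c) r
    _ = ∑ S ∈ (inwardStar c).powerset, f S.card := by
      refine Finset.sum_congr rfl fun S hS => ?_
      rw [alphaComp_inwardStar (Finset.mem_powerset.1 hS), hV, Nat.add_sub_add_right]
    _ = ∑ i ∈ Finset.range (n + 1), n.choose i • f i := by
      rw [Finset.sum_powerset_apply_card, card_inwardStar, hV, Nat.add_sub_cancel]
    _ = _ := by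
      refine Finset.sum_congr rfl fun i _ => ?_
      rw [← Nat.cast_smul_eq_nsmul ℚ, smul_smul, mul_comm]

end InwardStar

/-- For every `n ≥ 0`, the chromatic noncommutative symmetric function
of the inwardly directed star graph on `n + 1` vertices satisfies
`X_{S_{n+1}} = Σ_{i=0}^{n} (−1)^i (n choose i) Ψ_{(1^{n−i}, i+1)}`, where
`(1^{n−i}, i+1)` is the composition consisting of `n − i` parts equal to `1` followed by
a final part equal to `i + 1`. -/
theorem XD_inward_star (n : ℕ) :
    XD (inStarArcs n) inferInstance =
      ∑ i ∈ Finset.range (n + 1),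
        ((-1 : ℚ) ^ i * (n.choose i : ℚ)) •
          PsiComp (List.replicate (n - i) 1 ++ [i + 1]) := by
  rw [inStarArcs_eq_inwardStar]
  exact XD_inward_star_general 0 _ (Fintype.card_fin (n + 1))

end
end

section
/- (Stanley's power sum expansion) Let G be a finite simple graph with vertex set V and edge set E. Then X_G = Σ_{S ⊆ E} (−1)^{|S|} p_{λ(S)}, where for S ⊆ E, λ(S) is the partition of |V| whose parts are the sizes, sorted weakly decreasingly, of the connected components of the spanning subgraph (V, S). -/
open scoped Classical

noncomputable section

/-- The power sum `p_n = Σ_{i ∈ ℕ} x_i^n` in `MvPowerSeries ℕ ℚ` (intended for `n ≥ 1`). -/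
def psum (n : ℕ) : MvPowerSeries ℕ ℚ :=
  fun d => if ∃ i : ℕ, d = Finsupp.single i n then 1 else 0

/-- `p_λ = p_{λ_1} ⋯ p_{λ_ℓ}` for a partition `λ = (λ_1, …, λ_ℓ)`. -/
def psumProd (l : List ℕ) : MvPowerSeries ℕ ℚ := (l.map psum).prod

/-- A proper coloring of a simple graph: adjacent vertices receive distinct colors. -/
def Proper {V : Type} (G : SimpleGraph V) (κ : V → ℕ) : Prop :=
  ∀ u v, G.Adj u v → κ u ≠ κ v

/-- The chromatic symmetric function `X_G = Σ_κ Π_{v ∈ V} x_{κ(v)}` of a finite simple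
graph `G`, as an element of `MvPowerSeries ℕ ℚ`: the coefficient of the monomial `d` is
the (finite) number of proper colorings `κ : V → ℕ` using each color `c` exactly `d c`
times. -/
def XG {V : Type} [Fintype V] [DecidableEq V] (G : SimpleGraph V) : MvPowerSeries ℕ ℚ :=
  fun d =>
    (Nat.card {κ : V → ℕ // Proper G κ ∧
      ∀ c : ℕ, (Finset.univ.filter (fun v => κ v = c)).card = d c} : ℚ)

/-- The set of connected components (as vertex subsets) of the spanning subgraph
`(V, S)` determined by a set `S` of undirected edges. -/
def compsE {V : Type} [Fintype V] [DecidableEq V] (S : Finset (Sym2 V)) :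
    Finset (Finset V) :=
  Finset.univ.image
    (fun v => Finset.univ.filter
      (fun w => (SimpleGraph.fromEdgeSet (S : Set (Sym2 V))).Reachable v w))

/-- The partition `λ(S)`: the sizes of the connected components of the spanning
subgraph `(V, S)`, sorted weakly decreasingly. -/
def lamE {V : Type} [Fintype V] [DecidableEq V] (S : Finset (Sym2 V)) : List ℕ :=
  ((compsE S).toList.map Finset.card).mergeSort (fun a b => decide (b ≤ a))

/-!
Compare the coefficients of a monomial `d`, working in the finite set of colorings of `V` with
content `d`. The coefficient in `X_G` counts those for which no edge is monochromatic. The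
coefficient in `p_{λ(S)}` counts the colorings of the components of `(V, S)`, each component
weighted by its size; composed with the projection from `V` to the components, these become the
colorings of `V` for which every edge of `S` is monochromatic. The expansion is therefore
inclusion-exclusion over the set of monochromatic edges.
-/

section InclusionExclusion

variable {ι α R : Type*} [CommRing R]

lemma sum_powerset_neg_one_pow_card_mul_ite (s : Finset ι) (p : ι → Prop) :
    ∑ t ∈ s.powerset, (-1 : R) ^ t.card * (if ∀ i ∈ t, p i then 1 else 0) =
      if ∀ i ∈ s, ¬ p i then 1 else 0 :=
  calc ∑ t ∈ s.powerset, (-1 : R) ^ t.card * (if ∀ i ∈ t, p i then 1 else 0)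
      = ∏ i ∈ s, (1 - if p i then 1 else 0) := by
        simp only [Finset.prod_sub, Finset.prod_const_one, mul_one, Finset.prod_boole]
    _ = ∏ i ∈ s, if ¬ p i then 1 else 0 :=
        Finset.prod_congr rfl fun i _ ↦ by by_cases hi : p i <;> simp [hi]
    _ = if ∀ i ∈ s, ¬ p i then 1 else 0 := Finset.prod_boole

lemma ncard_forall_not_eq_sum_powerset {T : Set α} (hT : T.Finite) (s : Finset ι)
    (P : ι → α → Prop) :
    ({a ∈ T | ∀ i ∈ s, ¬ P i a}.ncard : R) =
      ∑ t ∈ s.powerset, (-1) ^ t.card * ({a ∈ T | ∀ i ∈ t, P i a}.ncard : R) := by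
  lift T to Finset α using hT
  have ncard_eq_sum (q : α → Prop) [DecidablePred q] :
      ({a ∈ (T : Set α) | q a}.ncard : R) = ∑ a ∈ T, if q a then 1 else 0 := by
    rw [Finset.sum_boole, ← Set.ncard_coe_finset, Finset.coe_filter]
    rfl
  simp only [ncard_eq_sum, Finset.mul_sum]
  rw [Finset.sum_comm]
  exact Finset.sum_congr rfl fun a _ ↦ (sum_powerset_neg_one_pow_card_mul_ite s (P · a)).symm

end InclusionExclusion

section WeightedContent

variable {ι γ σ : Type*} [Fintype ι]

/-- The content of a coloring `c` of the elements of `ι` with weights `w`, that is, the exponent of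
the monomial `∏ i, x_{c i} ^ w i`. -/
def weightedContent (w : ι → ℕ) (c : ι → σ) : σ →₀ ℕ := ∑ i, Finsupp.single (c i) (w i)

lemma weightedContent_one_apply [DecidableEq σ] (c : ι → σ) (a : σ) :
    weightedContent 1 c a = (Finset.univ.filter (c · = a)).card := by
  simp [weightedContent, Finsupp.finsetSum_apply, Finsupp.single_apply]

lemma le_weightedContent_apply (w : ι → ℕ) (c : ι → σ) (i : ι) :
    w i ≤ weightedContent w c (c i) := by
  have h : Finsupp.single (c i) (w i) ≤ weightedContent w c :=
    Finset.single_le_sum (f := fun i ↦ Finsupp.single (c i) (w i)) (fun _ _ ↦ zero_le)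
      (Finset.mem_univ i)
  simpa using h (c i)

lemma finite_setOf_weightedContent_eq {w : ι → ℕ} (hw : ∀ i, w i ≠ 0) (d : σ →₀ ℕ) :
    {c : ι → σ | weightedContent w c = d}.Finite := by
  refine (Set.Finite.pi' fun _ : ι ↦ d.support.finite_toSet).subset ?_
  rintro c rfl i
  exact Finsupp.mem_support_iff.2
    (Nat.ne_of_gt <| (Nat.pos_of_ne_zero (hw i)).trans_le (le_weightedContent_apply w c i))

lemma weightedContent_comp [Fintype γ] (w : ι → ℕ) (g : ι → γ) (c : γ → σ) :
    weightedContent w (c ∘ g) = weightedContent (fun k ↦ ∑ i with g i = k, w i) c := by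
  simp only [weightedContent, Finsupp.single_finsetSum]
  rw [← Finset.sum_fiberwise Finset.univ g]
  refine Finset.sum_congr rfl fun k _ ↦ Finset.sum_congr rfl fun i hi ↦ ?_
  rw [Function.comp_apply, (Finset.mem_filter.1 hi).2]

lemma coeff_psum (n : ℕ) (d : ℕ →₀ ℕ) :
    MvPowerSeries.coeff d (psum n) = if ∃ a, d = Finsupp.single a n then 1 else 0 :=
  rfl

lemma coeff_prod_psum {w : ι → ℕ} (hw : ∀ i, w i ≠ 0) (d : ℕ →₀ ℕ) :
    MvPowerSeries.coeff d (∏ i, psum (w i)) =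
      ({c : ι → ℕ | weightedContent w c = d}.ncard : ℚ) := by
  let split (c : ι → ℕ) : ι →₀ ℕ →₀ ℕ :=
    Finsupp.equivFunOnFinite.symm fun i ↦ Finsupp.single (c i) (w i)
  have split_injective : Function.Injective split := fun c c' h ↦ funext fun i ↦
    Finsupp.single_left_injective (hw i) (DFunLike.congr_fun h i)
  have image_split : split '' {c | weightedContent w c = d} =
      {l | l ∈ Finset.finsuppAntidiag Finset.univ d ∧
        ∀ i, ∃ a, l i = Finsupp.single a (w i)} := by
    ext l
    simp only [Set.mem_image, Set.mem_ofPred_eq, Finset.mem_finsuppAntidiag]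
    constructor
    · rintro ⟨c, hc, rfl⟩
      exact ⟨⟨hc, Finset.subset_univ _⟩, fun i ↦ ⟨c i, rfl⟩⟩
    · rintro ⟨⟨hsum, -⟩, hl⟩
      choose c hc using hl
      refine ⟨c, ?_, Finsupp.ext fun i ↦ (hc i).symm⟩
      rw [← hsum, weightedContent]
      exact Finset.sum_congr rfl fun i _ ↦ (hc i).symm
  simp only [MvPowerSeries.coeff_prod, coeff_psum, Fintype.prod_boole, Finset.sum_boole]
  rw [← Set.ncard_image_of_injective _ split_injective, image_split, ← Set.ncard_coe_finset,
    Finset.coe_filter]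

end WeightedContent

section ConnectedComponent

lemma surjective_connectedComponentMk {V : Type*} (H : SimpleGraph V) :
    Function.Surjective H.connectedComponentMk :=
  Quot.mk_surjective

lemma range_comp_connectedComponentMk {V α : Type*} (H : SimpleGraph V) :
    Set.range (fun f : H.ConnectedComponent → α ↦ f ∘ H.connectedComponentMk) =
      {κ | ∀ u v, H.Adj u v → κ u = κ v} := by
  ext κ
  constructor
  · rintro ⟨f, rfl⟩ u v huv
    exact congrArg f (SimpleGraph.ConnectedComponent.connectedComponentMk_eq_of_adj huv)
  · intro hκ
    have eq_of_walk {u v : V} (p : H.Walk u v) : κ u = κ v := by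
      induction p with
      | nil => rfl
      | cons huv _ ih => exact (hκ _ _ huv).trans ih
    exact ⟨fun C ↦ C.lift κ fun _ _ p _ ↦ eq_of_walk p, rfl⟩

lemma forall_fromEdgeSet_adj_iff_forall_isDiag_map {V α : Type*} (S : Set (Sym2 V)) (κ : V → α) :
    (∀ u v, (SimpleGraph.fromEdgeSet S).Adj u v → κ u = κ v) ↔ ∀ e ∈ S, (e.map κ).IsDiag := by
  simp only [SimpleGraph.fromEdgeSet_adj, Sym2.forall, Sym2.map_mk, Sym2.mk_isDiag_iff]
  refine forall₂_congr fun u v ↦ ⟨fun h huv ↦ ?_, fun h huv ↦ h huv.1⟩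
  by_cases huv' : u = v
  exacts [congrArg κ huv', h ⟨huv, huv'⟩]

lemma weightedContent_one_comp_connectedComponentMk {V σ : Type*} [Fintype V] (H : SimpleGraph V)
    [Fintype H.ConnectedComponent] (f : H.ConnectedComponent → σ) :
    weightedContent 1 (f ∘ H.connectedComponentMk) = weightedContent (fun C ↦ C.supp.ncard) f := by
  rw [weightedContent_comp]
  congr! 2 with C
  simp [SimpleGraph.ConnectedComponent.supp, Set.ncard_eq_toFinset_card']

lemma ncard_weightedContent_supp_eq {V σ : Type*} [Fintype V] (H : SimpleGraph V)
    [Fintype H.ConnectedComponent] (d : σ →₀ ℕ) :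
    {f : H.ConnectedComponent → σ | weightedContent (fun C ↦ C.supp.ncard) f = d}.ncard =
      {κ : V → σ | weightedContent 1 κ = d ∧ ∀ u v, H.Adj u v → κ u = κ v}.ncard := by
  have comp_mk_injective : Function.Injective
      fun f : H.ConnectedComponent → σ ↦ f ∘ H.connectedComponentMk :=
    (surjective_connectedComponentMk H).injective_comp_right
  rw [← Set.ncard_image_of_injective _ comp_mk_injective]
  simp only [← weightedContent_one_comp_connectedComponentMk]
  congr 1
  rw [Set.ofPred_and, ← range_comp_connectedComponentMk, ← Set.image_preimage_eq_inter_range]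
  rfl

end ConnectedComponent

section ChromaticSymmetricFunction

lemma proper_iff_forall_not_isDiag_map {V : Type} (G : SimpleGraph V) [Fintype G.edgeSet]
    (κ : V → ℕ) :
    Proper G κ ↔ ∀ e ∈ G.edgeFinset, ¬ (e.map κ).IsDiag := by
  simp [Proper, Sym2.forall]

variable {V : Type} [Fintype V] [DecidableEq V]

lemma coeff_XG (G : SimpleGraph V) (d : ℕ →₀ ℕ) :
    MvPowerSeries.coeff d (XG G) =
      ({κ : V → ℕ | weightedContent 1 κ = d ∧ Proper G κ}.ncard : ℚ) := by
  change (Nat.card _ : ℚ) = _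
  congr 1
  refine Nat.card_congr (Equiv.subtypeEquivRight fun κ ↦ ?_)
  rw [and_comm, Set.mem_ofPred_eq, Finsupp.ext_iff]
  simp only [weightedContent_one_apply]

lemma psumProd_lamE_eq_prod_compsE (S : Finset (Sym2 V)) :
    psumProd (lamE S) = ∏ C ∈ compsE S, psum C.card := by
  rw [psumProd, lamE, ((List.mergeSort_perm _ _).map psum).prod_eq, List.map_map,
    Finset.prod_map_toList]
  rfl

lemma mem_compsE (S : Finset (Sym2 V)) (A : Finset V) :
    A ∈ compsE S ↔
      ∃ C : (SimpleGraph.fromEdgeSet (S : Set (Sym2 V))).ConnectedComponent, C.supp = A := by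
  simp only [compsE, Finset.mem_image, Finset.mem_univ, true_and]
  refine (exists_congr fun v ↦ ?_).trans (surjective_connectedComponentMk _).exists.symm
  rw [← Finset.coe_inj]
  refine Eq.congr_left (Set.ext fun w ↦ ?_)
  simpa using SimpleGraph.reachable_comm

lemma psumProd_lamE (S : Finset (Sym2 V)) :
    psumProd (lamE S) =
      ∏ C : (SimpleGraph.fromEdgeSet (S : Set (Sym2 V))).ConnectedComponent,
        psum C.supp.ncard := by
  rw [psumProd_lamE_eq_prod_compsE]
  symm
  refine Finset.prod_nbij (fun C ↦ C.supp.toFinset) ?_ ?_ ?_ ?_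
  · intro C _
    exact (mem_compsE S _).2 ⟨C, by simp⟩
  · intro C _ D _ h
    exact SimpleGraph.ConnectedComponent.supp_injective (Set.toFinset_inj.1 h)
  · intro A hA
    obtain ⟨C, hC⟩ := (mem_compsE S A).1 hA
    exact ⟨C, Finset.mem_coe.2 (Finset.mem_univ C), by simp [hC]⟩
  · intro C _
    rw [Set.ncard_eq_toFinset_card']

lemma coeff_psumProd_lamE (S : Finset (Sym2 V)) (d : ℕ →₀ ℕ) :
    MvPowerSeries.coeff d (psumProd (lamE S)) =
      ({κ : V → ℕ | weightedContent 1 κ = d ∧ ∀ e ∈ S, (e.map κ).IsDiag}.ncard : ℚ) := by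
  have supp_ncard_ne_zero (C : (SimpleGraph.fromEdgeSet (S : Set (Sym2 V))).ConnectedComponent) :
      C.supp.ncard ≠ 0 :=
    C.nonempty_supp.ncard_pos.ne'
  rw [psumProd_lamE, coeff_prod_psum supp_ncard_ne_zero, ncard_weightedContent_supp_eq]
  simp only [forall_fromEdgeSet_adj_iff_forall_isDiag_map, Finset.mem_coe]

end ChromaticSymmetricFunction

/-- Stanley's power sum expansion.  For a finite simple graph
`G = (V, E)`, `X_G = Σ_{S ⊆ E} (−1)^{|S|} p_{λ(S)}`, where `λ(S)` is the partition of
`|V|` whose parts are the sizes of the connected components of the spanning subgraph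
`(V, S)`. -/
theorem XG_psum_expansion {V : Type} [Fintype V] [DecidableEq V]
    (G : SimpleGraph V) [DecidableRel G.Adj] :
    XG G = ∑ S ∈ G.edgeFinset.powerset, ((-1 : ℚ) ^ S.card) • psumProd (lamE S) := by
  ext d
  have hfin : {κ : V → ℕ | weightedContent 1 κ = d}.Finite :=
    finite_setOf_weightedContent_eq (fun _ ↦ one_ne_zero) d
  simp only [coeff_XG, proper_iff_forall_not_isDiag_map, map_sum, map_smul, smul_eq_mul,
    coeff_psumProd_lamE]
  exact ncard_forall_not_eq_sum_powerset hfin G.edgeFinset fun e κ ↦ (e.map κ).IsDiag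

end
end
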